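/- Let σ^+ be the one-sided full shift on Σ_M^+ = {1, …, M}^{ℕ∪{0}}. If A ⊂ Σ_M^+ satisfies h(σ^+, A) < h(σ^+), then h(σ^+, I^+_{σ^+|Σ_M^+}(A)) = h(σ^+). -/

import Mathlib

open Set Filter Topology MeasureTheory
open scoped NNReal ENNReal

noncomputable section

namespace ExceptionalSets

variable {X : Type*}

/-- The forward orbit `{fᵏ(x) : k ≥ 0}`. -/
def forwardOrbit (f : X → X) (x : X) : Set X := Set.range fun n : ℕ => f^[n] x

/-- The ω-limit set of `x`: the set of limit points of the forward orbit of `x`. -/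
def omegaSet [TopologicalSpace X] (f : X → X) (x : X) : Set X :=
  {y | ∃ φ : ℕ → ℕ, StrictMono φ ∧ Tendsto (fun n => f^[φ n] x) atTop (𝓝 y)}

/-- The limit `A`-exceptional set `I⁺_{f|W}(A)`. -/
def limitExc [TopologicalSpace X] (f : X → X) (W A : Set X) : Set X :=
  {x ∈ W | omegaSet f x ∩ A = ∅}

/-- The `A`-exceptional set `E⁺_{f|W}(A)`. -/
def exc [TopologicalSpace X] (f : X → X) (W A : Set X) : Set X :=
  {x ∈ W | closure (forwardOrbit f x) ∩ A = ∅}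

/-- For `U ⊆ X`, the largest `n` (possibly `∞`) such that `fᵏ(U ∩ W)` is contained in
some element of the finite collection `𝒜` for all `k < n`: Bowen's `n_{f,𝒜}(U)`. -/
def itinIndex [TopologicalSpace X] (f : X → X) (W : Set X) (𝒜 : Finset (Set X))
    (U : Set X) : ℕ∞ :=
  sSup {n : ℕ∞ | ∀ k : ℕ, (k : ℕ∞) < n → ∃ A ∈ 𝒜, f^[k] '' (U ∩ W) ⊆ A}

/-- The weight `e^{-d·n} ∈ ℝ≥0∞` (for `d ≥ 0`). -/
def expWeight (d : ℝ) (n : ℕ∞) : ℝ≥0∞ :=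
  ⨅ (k : ℕ) (_ : (k : ℕ∞) ≤ n), ENNReal.ofReal (Real.exp (-(d * k)))

/-- Bowen's outer measure `m_{𝒜,d}(Y)` for the dynamics of `f` on `W`. -/
def bowenM [TopologicalSpace X] (f : X → X) (W : Set X) (𝒜 : Finset (Set X)) (d : ℝ)
    (Y : Set X) : ℝ≥0∞ :=
  ⨆ N : ℕ, ⨅ (𝒰 : ℕ → Set X)
    (_ : (∀ i, IsOpen (𝒰 i)) ∧ Y ⊆ (⋃ i, 𝒰 i) ∧ ∀ i, (N : ℕ∞) ≤ itinIndex f W 𝒜 (𝒰 i)),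
    ∑' i, expWeight d (itinIndex f W 𝒜 (𝒰 i))

/-- The critical value of `d ↦ m_{𝒜,d}(Y)`. -/
def entropyCover [TopologicalSpace X] (f : X → X) (W : Set X) (𝒜 : Finset (Set X))
    (Y : Set X) : ℝ :=
  sInf {d : ℝ | 0 ≤ d ∧ bowenM f W 𝒜 d Y = 0}

/-- Bowen's topological entropy `h(f|_W, Y)` of `f` on the (not necessarily compact or
invariant) subset `Y` of `W`, defined via finite open covers of `W`. -/
def entropyOn [TopologicalSpace X] (f : X → X) (W Y : Set X) : ℝ :=
  ⨆ (𝒜 : Finset (Set X)) (_ : (∀ A ∈ 𝒜, IsOpen A) ∧ W ⊆ ⋃₀ ↑𝒜), entropyCover f W 𝒜 Y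

/-- The one-sided full shift on `Σ_m^+ = {1,…,m}^{ℕ∪{0}}`. -/
def oneShift (m : ℕ) : (ℕ → Fin m) → (ℕ → Fin m) := fun x n => x (n + 1)

/-!
A set of sequences of entropy less than `log m` is covered by cylinders of lengths `Lᵢ > 0` with
`∑ᵢ q ^ Lᵢ` as small as desired, for some `q > 1 / m`. Miller's counting argument then shows that
the words `wᵢ` defining these cylinders can all be avoided at once: if `1 + ∑ᵢ q ^ |wᵢ| ≤ m * q`,
the number `aₙ` of words of length `n` containing no `wᵢ` satisfies `aₙ ≤ q * aₙ₊₁`, because a left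
extension by one letter of an avoiding word fails to be avoiding only if it starts with some `wᵢ`.
By compactness some sequence contains no `wᵢ`, and the closure of its orbit misses the given set.

If `A` and `E⁺(A)` both had entropy less than `log m`, so would their union, and a point whose orbit
closure misses `A ∪ E⁺(A)` would lie in `E⁺(A)` and yet outside it. As `E⁺(A) ⊆ I⁺(A)`, the limit
exceptional set has full entropy as well.
-/

section ForbiddenWords

variable {α ι : Type*} {w : ι → List α} {c : ℝ≥0∞}

lemma le_pow_mul_of_forall_le_mul_succ {R : Type*} [Monoid R] [Preorder R] [MulLeftMono R]
    {u : ℕ → R} {c : R} {n k : ℕ} (hu : ∀ j < n, u j ≤ c * u (j + 1)) (hk : k ≤ n) :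
    u (n - k) ≤ c ^ k * u n := by
  induction k with
  | zero => simp
  | succ k ih =>
    calc u (n - (k + 1)) ≤ c * u (n - (k + 1) + 1) := hu _ (by lia)
      _ = c * u (n - k) := by rw [show n - (k + 1) + 1 = n - k by lia]
      _ ≤ c * (c ^ k * u n) := mul_le_mul_right (ih (by lia)) c
      _ = c ^ (k + 1) * u n := by rw [pow_succ', mul_assoc]

lemma card_le_tsum_card_of_subset_iUnion {β : Type*} {s : Finset β} {t : ι → Finset β}
    (h : (s : Set β) ⊆ ⋃ i, t i) : (s.card : ℝ≥0∞) ≤ ∑' i, ((t i).card : ℝ≥0∞) := by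
  classical
  obtain ⟨I, hI, hs⟩ := Set.finite_subset_iUnion s.finite_toSet h
  lift I to Finset ι using hI
  have hs' : s ⊆ I.biUnion t := fun b hb => by simpa using hs hb
  calc (s.card : ℝ≥0∞) ≤ ∑ i ∈ I, ((t i).card : ℝ≥0∞) := by
        exact_mod_cast (Finset.card_le_card hs').trans Finset.card_biUnion_le
    _ ≤ ∑' i, ((t i).card : ℝ≥0∞) := ENNReal.sum_le_tsum I

lemma exists_append_eq_cons_of_not_infix (hw : ∀ i, w i ≠ []) {a : α} {l : List α}
    (hl : ∀ i, ¬ w i <:+: l) (hal : ∃ i, w i <:+: a :: l) :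
    ∃ i r, w i ++ r = a :: l ∧ ∀ j, ¬ w j <:+: r := by
  obtain ⟨i, hi⟩ := hal
  obtain ⟨r, hr⟩ := (List.infix_cons_iff.1 hi).resolve_right (hl i)
  obtain ⟨b, t, hbt⟩ := List.exists_cons_of_ne_nil (hw i)
  have htr : t ++ r = l := by
    rw [hbt, List.cons_append] at hr
    exact List.tail_eq_of_cons_eq hr
  exact ⟨i, r, hr, fun j hj => hl j (hj.trans (htr ▸ (List.suffix_append t r).isInfix))⟩

variable [Fintype α]

open Classical in
/-- The language of the subshift with forbidden words `w i`, cut down to length `n`: the words of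
length `n` in which no `w i` occurs as a block of consecutive letters. -/
def avoidingWords (w : ι → List α) (n : ℕ) : Finset (List α) :=
  (List.finite_length_eq α n).toFinset.filter fun l => ∀ i, ¬ w i <:+: l

lemma mem_avoidingWords {n : ℕ} {l : List α} :
    l ∈ avoidingWords w n ↔ l.length = n ∧ ∀ i, ¬ w i <:+: l := by
  simp [avoidingWords]

lemma card_mul_card_avoidingWords_le (hw : ∀ i, w i ≠ []) (n : ℕ) :
    (Fintype.card α * (avoidingWords w n).card : ℝ≥0∞) ≤ (avoidingWords w (n + 1)).card +
      ∑' i : {i // (w i).length ≤ n + 1},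
        ((avoidingWords w (n + 1 - (w i).length)).card : ℝ≥0∞) := by
  classical
  set E := (Finset.univ ×ˢ avoidingWords w n).image fun p : α × List α => p.1 :: p.2 with hE
  have hEcard : E.card = Fintype.card α * (avoidingWords w n).card := by
    rw [hE, Finset.card_image_of_injective, Finset.card_product, Finset.card_univ]
    rintro ⟨a, l⟩ ⟨b, l'⟩ h
    simpa using h
  have hsub : ((E \ avoidingWords w (n + 1) : Finset (List α)) : Set (List α)) ⊆
      ⋃ i : {i // (w i).length ≤ n + 1},
        ((avoidingWords w (n + 1 - (w i).length)).image (w i ++ ·) : Finset (List α)) := by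
    intro u hu
    obtain ⟨hu, hbad⟩ := Finset.mem_sdiff.1 hu
    obtain ⟨⟨a, l⟩, hal, rfl⟩ := Finset.mem_image.1 hu
    obtain ⟨hlen, hl⟩ := mem_avoidingWords.1 (Finset.mem_product.1 hal).2
    obtain ⟨i, r, hr, hravoid⟩ := exists_append_eq_cons_of_not_infix hw hl (a := a) (by
      simpa [mem_avoidingWords, hlen] using hbad)
    have hlens : (w i).length + r.length = n + 1 := by
      simpa [hlen] using congrArg List.length hr
    exact mem_iUnion.2 ⟨⟨i, by lia⟩, Finset.mem_coe.2 <| Finset.mem_image.2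
      ⟨r, mem_avoidingWords.2 ⟨by lia, hravoid⟩, hr⟩⟩
  calc (Fintype.card α * (avoidingWords w n).card : ℝ≥0∞)
      = E.card := by
        rw [hEcard, Nat.cast_mul]
    _ ≤ (avoidingWords w (n + 1)).card + (E \ avoidingWords w (n + 1)).card := by
        exact_mod_cast Finset.card_le_card_sdiff_add_card.trans_eq (add_comm _ _)
    _ ≤ _ := by
        gcongr
        refine (card_le_tsum_card_of_subset_iUnion hsub).trans (ENNReal.tsum_le_tsum fun i => ?_)
        exact_mod_cast Finset.card_image_le

lemma card_avoidingWords_le_mul_succ (hw : ∀ i, w i ≠ []) (hc : c ≠ ⊤)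
    (hsum : ∑' i, c ^ (w i).length + 1 ≤ Fintype.card α * c) (n : ℕ) :
    ((avoidingWords w n).card : ℝ≥0∞) ≤ c * (avoidingWords w (n + 1)).card := by
  induction n using Nat.strong_induction_on with
  | _ n ih =>
    have hterm (i : {i // (w i).length ≤ n + 1}) :
        c * (avoidingWords w (n + 1 - (w i).length)).card ≤
          c ^ (w i).length * (avoidingWords w n).card := by
      obtain ⟨k, hk⟩ := Nat.exists_eq_add_one.2 (List.length_pos_iff.2 (hw i))
      have hkn : k ≤ n := Nat.le_of_succ_le_succ (hk.symm.trans_le i.2)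
      rw [hk, Nat.add_sub_add_right, pow_succ', mul_assoc]
      gcongr
      exact le_pow_mul_of_forall_le_mul_succ
        (u := fun j => ((avoidingWords w j).card : ℝ≥0∞)) ih hkn
    set total := ∑' i, c ^ (w i).length
    have hfinite : total * (avoidingWords w n).card ≠ ⊤ :=
      ENNReal.mul_ne_top (ne_top_of_le_ne_top (ENNReal.mul_ne_top (ENNReal.natCast_ne_top _) hc)
        (le_self_add.trans hsum)) (ENNReal.natCast_ne_top _)
    refine (ENNReal.add_le_add_iff_right hfinite).1 ?_
    calc (avoidingWords w n).card + total * (avoidingWords w n).card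
        = (total + 1) * (avoidingWords w n).card := by ring
      _ ≤ Fintype.card α * c * (avoidingWords w n).card := by gcongr
      _ = c * (Fintype.card α * (avoidingWords w n).card) := by ring
      _ ≤ c * ((avoidingWords w (n + 1)).card + ∑' i : {i // (w i).length ≤ n + 1},
            ((avoidingWords w (n + 1 - (w i).length)).card : ℝ≥0∞)) := by
          gcongr
          exact card_mul_card_avoidingWords_le hw n
      _ ≤ c * (avoidingWords w (n + 1)).card + ∑' i : {i // (w i).length ≤ n + 1},
            c ^ (w i).length * (avoidingWords w n).card := by
          rw [mul_add, ← ENNReal.tsum_mul_left]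
          gcongr _ + ?_
          exact ENNReal.tsum_le_tsum hterm
      _ ≤ c * (avoidingWords w (n + 1)).card + total * (avoidingWords w n).card := by
          rw [ENNReal.tsum_mul_right]
          gcongr
          exact ENNReal.tsum_comp_le_tsum_of_injective Subtype.val_injective _

lemma avoidingWords_nonempty (hw : ∀ i, w i ≠ []) (hc : c ≠ ⊤)
    (hsum : ∑' i, c ^ (w i).length + 1 ≤ Fintype.card α * c) (n : ℕ) :
    (avoidingWords w n).Nonempty := by
  induction n with
  | zero => exact ⟨[], mem_avoidingWords.2 ⟨rfl, fun i h => hw i (List.infix_nil.1 h)⟩⟩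
  | succ n ih =>
    contrapose! ih
    simpa [ih] using card_avoidingWords_le_mul_succ hw hc hsum n

end ForbiddenWords

section Sequences

variable {α ι : Type*}

lemma exists_res_length_eq [Nonempty α] (l : List α) :
    ∃ x : ℕ → α, PiNat.res x l.length = l := by
  induction l with
  | nil => exact ⟨Classical.arbitrary _, rfl⟩
  | cons a l ih =>
    obtain ⟨x, hx⟩ := ih
    refine ⟨Function.update x l.length a, ?_⟩
    rw [List.length_cons, PiNat.res_succ, Function.update_self, List.cons_inj_right]
    exact (PiNat.res_eq_res.2 fun j hj => Function.update_of_ne hj.ne _ _).trans hx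

lemma isLocallyConstant_res [TopologicalSpace α] [DiscreteTopology α] (n : ℕ) :
    IsLocallyConstant fun x : ℕ → α => PiNat.res x n :=
  (IsLocallyConstant.iff_exists_open _).2 fun x =>
    ⟨PiNat.cylinder x n, PiNat.isOpen_cylinder _ x n, PiNat.self_mem_cylinder x n, fun _ hy =>
      PiNat.res_eq_res.2 hy⟩

lemma exists_forall_not_infix_res [Fintype α] [Nonempty α] {w : ι → List α} {c : ℝ≥0∞}
    (hw : ∀ i, w i ≠ []) (hc : c ≠ ⊤)
    (hsum : ∑' i, c ^ (w i).length + 1 ≤ Fintype.card α * c) :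
    ∃ x : ℕ → α, ∀ n i, ¬ w i <:+: PiNat.res x n := by
  let _ : TopologicalSpace α := ⊥
  have _ : DiscreteTopology α := ⟨rfl⟩
  let K (n : ℕ) : Set (ℕ → α) := {x | ∀ i, ¬ w i <:+: PiNat.res x n}
  have hclosed (n : ℕ) : IsClosed (K n) :=
    ⟨isLocallyConstant_res n {l | ∀ i, ¬ w i <:+: l}ᶜ⟩
  have hanti (n : ℕ) : K (n + 1) ⊆ K n := fun x hx i hi =>
    hx i (hi.trans (List.suffix_cons (x n) (PiNat.res x n)).isInfix)
  have hnonempty (n : ℕ) : (K n).Nonempty := by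
    obtain ⟨l, hl⟩ := avoidingWords_nonempty hw hc hsum n
    obtain ⟨rfl, havoid⟩ := mem_avoidingWords.1 hl
    obtain ⟨x, hx⟩ := exists_res_length_eq l
    exact ⟨x, fun i => hx.symm ▸ havoid i⟩
  obtain ⟨x, hx⟩ := IsCompact.nonempty_iInter_of_sequence_nonempty_isCompact_isClosed
    K hanti hnonempty (hclosed 0).isCompact hclosed
  exact ⟨x, mem_iInter.1 hx⟩

lemma exists_forall_cylinder_subset {E : ℕ → Type*} [∀ n, TopologicalSpace (E n)]
    [∀ n, DiscreteTopology (E n)] [CompactSpace (∀ n, E n)] {𝒜 : Set (Set (∀ n, E n))}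
    (hopen : ∀ A ∈ 𝒜, IsOpen A) (hcover : univ ⊆ ⋃₀ 𝒜) :
    ∃ l, ∀ x, ∃ A ∈ 𝒜, PiNat.cylinder x l ⊆ A := by
  let _ := PiNat.metricSpace (E := E)
  obtain ⟨δ, hδ, hball⟩ := lebesgue_number_lemma_of_metric_sUnion isCompact_univ hopen hcover
  obtain ⟨l, hl⟩ := exists_pow_lt_of_lt_one hδ one_half_lt_one
  refine ⟨l, fun x => ?_⟩
  obtain ⟨A, hA, hxA⟩ := hball x (mem_univ x)
  exact ⟨A, hA, fun y hy => hxA ((PiNat.mem_cylinder_iff_dist_le.1 hy).trans_lt hl)⟩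

end Sequences

section Bowen

variable [TopologicalSpace X] {f : X → X} {W U Y Z A : Set X} {𝒜 : Finset (Set X)} {d : ℝ}
  {N : ℕ} {ι : Type*} {𝒰 : ι → Set X}

lemma omegaSet_subset_closure_forwardOrbit (f : X → X) (x : X) :
    omegaSet f x ⊆ closure (forwardOrbit f x) :=
  fun _ ⟨φ, _, hφ⟩ => mem_closure_of_tendsto hφ (.of_forall fun n => mem_range_self (φ n))

lemma notMem_of_mem_exc {x : X} (hx : x ∈ exc f W A) : x ∉ A := fun hxA =>
  notMem_empty x (hx.2.subset ⟨subset_closure (mem_range_self 0), hxA⟩)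

lemma exc_anti (f : X → X) (W : Set X) : Antitone (exc f W) := fun _ _ hAB _ hx =>
  ⟨hx.1, subset_empty_iff.1 ((inter_subset_inter_right _ hAB).trans hx.2.subset)⟩

lemma exc_subset_limitExc : exc f W A ⊆ limitExc f W A := fun x ⟨hxW, hx⟩ =>
  ⟨hxW, subset_empty_iff.1 <|
    (inter_subset_inter_left A (omegaSet_subset_closure_forwardOrbit f x)).trans hx.subset⟩

lemma le_itinIndex {n : ℕ∞}
    (h : ∀ k : ℕ, (k : ℕ∞) < n → ∃ A ∈ 𝒜, f^[k] '' (U ∩ W) ⊆ A) : n ≤ itinIndex f W 𝒜 U :=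
  le_sSup h

lemma exists_image_subset_of_lt_itinIndex {k : ℕ} (h : (k : ℕ∞) < itinIndex f W 𝒜 U) :
    ∃ A ∈ 𝒜, f^[k] '' (U ∩ W) ⊆ A := by
  obtain ⟨n, hn, hkn⟩ := lt_sSup_iff.1 h
  exact hn k hkn

lemma itinIndex_empty (h𝒜 : 𝒜.Nonempty) : itinIndex f W 𝒜 ∅ = ⊤ := by
  obtain ⟨A, hA⟩ := h𝒜
  exact top_le_iff.1 (le_itinIndex fun k _ => ⟨A, hA, by simp⟩)

lemma ofReal_exp_neg_mul_natCast (d : ℝ) (k : ℕ) :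
    ENNReal.ofReal (Real.exp (-(d * k))) = ENNReal.ofReal (Real.exp (-d)) ^ k := by
  rw [← ENNReal.ofReal_pow (Real.exp_pos _).le, ← Real.exp_nat_mul]
  ring_nf

lemma expWeight_le_of_natCast_le {n : ℕ∞} {k : ℕ} (h : (k : ℕ∞) ≤ n) :
    expWeight d n ≤ ENNReal.ofReal (Real.exp (-d)) ^ k :=
  (iInf₂_le k h).trans_eq (ofReal_exp_neg_mul_natCast d k)

lemma expWeight_top (hd : 0 < d) : expWeight d ⊤ = 0 := by
  have hlt : ENNReal.ofReal (Real.exp (-d)) < 1 := by simpa using hd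
  exact le_antisymm (ge_of_tendsto' (ENNReal.tendsto_pow_atTop_nhds_zero_of_lt_one hlt)
    fun k => expWeight_le_of_natCast_le le_top) zero_le

lemma expWeight_anti (n : ℕ∞) : Antitone fun d => expWeight d n := fun d d' h =>
  iInf₂_mono fun k _ => by gcongr

lemma exists_pos_pow_le_expWeight_add (hd : 0 ≤ d) {n : ℕ∞} (hn : 1 ≤ n) {δ : ℝ≥0∞}
    (hδ : δ ≠ 0) :
    ∃ k : ℕ, 0 < k ∧ (k : ℕ∞) ≤ n ∧ ENNReal.ofReal (Real.exp (-d)) ^ k ≤ expWeight d n + δ := by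
  rw [← Nat.cast_one] at hn
  have hfinite : expWeight d n ≠ ⊤ :=
    ne_top_of_le_ne_top (ENNReal.pow_ne_top ENNReal.ofReal_ne_top) (expWeight_le_of_natCast_le hn)
  obtain ⟨k, hk, hlt⟩ : ∃ k : ℕ, (k : ℕ∞) ≤ n ∧
      ENNReal.ofReal (Real.exp (-(d * k))) < expWeight d n + δ := by
    simpa only [expWeight, iInf_lt_iff, exists_prop] using ENNReal.lt_add_right hfinite hδ
  refine ⟨max k 1, by simp, max_rec' (fun j : ℕ => (j : ℕ∞) ≤ n) hk hn, le_trans ?_ hlt.le⟩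
  rw [ofReal_exp_neg_mul_natCast]
  exact pow_le_pow_right_of_le_one' (by simpa using hd) (le_max_left k 1)

/-- The covers admissible in `bowenM f W 𝒜 d Y` at depth `N`: families of open sets covering `Y`,
all of Bowen index at least `N`. The index type is arbitrary, whereas `bowenM` uses `ℕ`. -/
structure IsBowenCover (f : X → X) (W : Set X) (𝒜 : Finset (Set X)) (Y : Set X) (N : ℕ)
    (𝒰 : ι → Set X) : Prop where
  isOpen : ∀ i, IsOpen (𝒰 i)
  subset_iUnion : Y ⊆ ⋃ i, 𝒰 i
  le_itinIndex : ∀ i, (N : ℕ∞) ≤ itinIndex f W 𝒜 (𝒰 i)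

lemma IsBowenCover.mono {N' : ℕ} (h : IsBowenCover f W 𝒜 Y N 𝒰) (hZ : Z ⊆ Y) (hN : N' ≤ N) :
    IsBowenCover f W 𝒜 Z N' 𝒰 :=
  ⟨h.isOpen, hZ.trans h.subset_iUnion, fun i => (by exact_mod_cast hN : (N' : ℕ∞) ≤ N).trans
    (h.le_itinIndex i)⟩

lemma IsBowenCover.sumElim {κ : Type*} {𝒱 : κ → Set X} (h : IsBowenCover f W 𝒜 Y N 𝒰)
    (h' : IsBowenCover f W 𝒜 Z N 𝒱) : IsBowenCover f W 𝒜 (Y ∪ Z) N (Sum.elim 𝒰 𝒱) where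
  isOpen := Sum.forall.2 ⟨h.isOpen, h'.isOpen⟩
  subset_iUnion := by
    rw [iUnion_sum]
    exact union_subset_union h.subset_iUnion h'.subset_iUnion
  le_itinIndex := Sum.forall.2 ⟨h.le_itinIndex, h'.le_itinIndex⟩

lemma IsBowenCover.comp_equiv {κ : Type*} (h : IsBowenCover f W 𝒜 Y N 𝒰) (e : κ ≃ ι) :
    IsBowenCover f W 𝒜 Y N (𝒰 ∘ e) where
  isOpen i := h.isOpen (e i)
  subset_iUnion := h.subset_iUnion.trans_eq (e.surjective.iUnion_comp 𝒰).symm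
  le_itinIndex i := h.le_itinIndex (e i)

lemma IsBowenCover.exists_nat_of_countable [Countable ι] (h𝒜 : 𝒜.Nonempty) (hd : 0 < d)
    (h : IsBowenCover f W 𝒜 Y N 𝒰) :
    ∃ 𝒱 : ℕ → Set X, IsBowenCover f W 𝒜 Y N 𝒱 ∧
      ∑' n, expWeight d (itinIndex f W 𝒜 (𝒱 n)) = ∑' i, expWeight d (itinIndex f W 𝒜 (𝒰 i)) := by
  have := Encodable.ofCountable ι
  refine ⟨fun n => ⋃ i ∈ Encodable.decode₂ ι n, 𝒰 i, ⟨fun n => ?_, ?_, fun n => ?_⟩, ?_⟩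
  · exact Encodable.iUnion_decode₂_cases isOpen_empty h.isOpen
  · rw [Encodable.iUnion_decode₂]
    exact h.subset_iUnion
  · exact Encodable.iUnion_decode₂_cases (C := fun U => (N : ℕ∞) ≤ itinIndex f W 𝒜 U)
      (by simp [itinIndex_empty h𝒜]) h.le_itinIndex
  · exact tsum_iUnion_decode₂ (fun U => expWeight d (itinIndex f W 𝒜 U))
      (by rw [itinIndex_empty h𝒜, expWeight_top hd]) 𝒰

lemma bowenM_eq_zero_iff :
    bowenM f W 𝒜 d Y = 0 ↔ ∀ N : ℕ, ∀ ε > 0, ∃ 𝒰 : ℕ → Set X, IsBowenCover f W 𝒜 Y N 𝒰 ∧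
      ∑' i, expWeight d (itinIndex f W 𝒜 (𝒰 i)) < ε := by
  rw [bowenM, ENNReal.iSup_eq_zero]
  refine forall_congr' fun N => ?_
  rw [← nonpos_iff_eq_zero, ← forall_gt_iff_le]
  simp only [iInf_lt_iff, exists_prop]
  exact forall₂_congr fun ε _ => exists_congr fun 𝒰 => and_congr_left fun _ =>
    ⟨fun ⟨h₁, h₂, h₃⟩ => ⟨h₁, h₂, h₃⟩, fun ⟨h₁, h₂, h₃⟩ => ⟨h₁, h₂, h₃⟩⟩

lemma bowenM_anti (Y : Set X) : Antitone fun d => bowenM f W 𝒜 d Y := fun _ _ h =>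
  iSup_mono fun _ => iInf₂_mono fun _ _ => ENNReal.tsum_le_tsum fun _ => expWeight_anti _ h

lemma bowenM_mono (d : ℝ) : Monotone (bowenM f W 𝒜 d) := fun _ _ h =>
  iSup_mono fun _ => iInf_mono fun _ => iInf_const_mono fun ⟨hopen, hcover, hN⟩ =>
    ⟨hopen, h.trans hcover, hN⟩

lemma bowenM_union_eq_zero (hY : bowenM f W 𝒜 d Y = 0) (hZ : bowenM f W 𝒜 d Z = 0) :
    bowenM f W 𝒜 d (Y ∪ Z) = 0 := by
  refine bowenM_eq_zero_iff.2 fun N ε hε => ?_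
  obtain ⟨𝒰, h𝒰, hsum𝒰⟩ := bowenM_eq_zero_iff.1 hY N (ε / 2) (ENNReal.half_pos hε.ne')
  obtain ⟨𝒱, h𝒱, hsum𝒱⟩ := bowenM_eq_zero_iff.1 hZ N (ε / 2) (ENNReal.half_pos hε.ne')
  let e := Equiv.natSumNatEquivNat.symm
  refine ⟨Sum.elim 𝒰 𝒱 ∘ e, (h𝒰.sumElim h𝒱).comp_equiv e, ?_⟩
  calc ∑' n, expWeight d (itinIndex f W 𝒜 (Sum.elim 𝒰 𝒱 (e n)))
      = ∑' s, expWeight d (itinIndex f W 𝒜 (Sum.elim 𝒰 𝒱 s)) :=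
        e.tsum_eq fun s => expWeight d (itinIndex f W 𝒜 (Sum.elim 𝒰 𝒱 s))
    _ = ∑' i, expWeight d (itinIndex f W 𝒜 (𝒰 i)) +
          ∑' j, expWeight d (itinIndex f W 𝒜 (𝒱 j)) :=
        ENNReal.summable.tsum_sum ENNReal.summable
    _ < ε / 2 + ε / 2 := ENNReal.add_lt_add hsum𝒰 hsum𝒱
    _ = ε := ENNReal.add_halves ε

lemma bowenM_eq_zero_of_card_le {C r : ℝ} {κ : ℕ → Type*} [∀ n, Fintype (κ n)]
    {𝒱 : ∀ n, κ n → Set X} (h𝒜 : 𝒜.Nonempty) (hd : 0 < d) (hr : 0 ≤ r) (hrd : r < Real.exp d)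
    (h𝒱 : ∀ n, IsBowenCover f W 𝒜 Y n (𝒱 n)) (hcard : ∀ n, Fintype.card (κ n) ≤ C * r ^ n) :
    bowenM f W 𝒜 d Y = 0 := by
  refine bowenM_eq_zero_iff.2 fun N ε hε => ?_
  have hlim : Tendsto (fun n => ENNReal.ofReal (C * (r * Real.exp (-d)) ^ n)) atTop (𝓝 0) := by
    have hlt : r * Real.exp (-d) < 1 := by
      rwa [Real.exp_neg, ← div_eq_mul_inv, div_lt_one (Real.exp_pos d)]
    simpa using ENNReal.tendsto_ofReal
      ((tendsto_pow_atTop_nhds_zero_of_lt_one (by positivity) hlt).const_mul C)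
  obtain ⟨n, hn, hNn⟩ := ((hlim.eventually_lt_const hε).and (eventually_ge_atTop N)).exists
  obtain ⟨𝒰, h𝒰, hsum⟩ := ((h𝒱 n).mono subset_rfl hNn).exists_nat_of_countable h𝒜 hd
  refine ⟨𝒰, h𝒰, lt_of_le_of_lt ?_ hn⟩
  calc ∑' i, expWeight d (itinIndex f W 𝒜 (𝒰 i))
      = ∑ i, expWeight d (itinIndex f W 𝒜 (𝒱 n i)) := hsum.trans (tsum_fintype _)
    _ ≤ ∑ _ : κ n, ENNReal.ofReal (Real.exp (-d)) ^ n := by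
        gcongr with i
        exact expWeight_le_of_natCast_le ((h𝒱 n).le_itinIndex i)
    _ = ENNReal.ofReal (Fintype.card (κ n) * Real.exp (-d) ^ n) := by
        rw [ENNReal.ofReal_mul (Nat.cast_nonneg _), ENNReal.ofReal_pow (Real.exp_pos _).le]
        simp
    _ ≤ ENNReal.ofReal (C * r ^ n * Real.exp (-d) ^ n) := by
        gcongr
        exact hcard n
    _ = ENNReal.ofReal (C * (r * Real.exp (-d)) ^ n) := by rw [mul_pow, mul_assoc]

/-- The finite open covers of `W` over which `entropyOn f W Y` is a supremum. -/
abbrev IsFiniteOpenCover (W : Set X) (𝒜 : Finset (Set X)) : Prop :=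
  (∀ A ∈ 𝒜, IsOpen A) ∧ W ⊆ ⋃₀ ↑𝒜

lemma entropyCover_nonneg : 0 ≤ entropyCover f W 𝒜 Y :=
  Real.sInf_nonneg fun _ hd => hd.1

lemma entropyCover_le (hd : 0 ≤ d) (h : bowenM f W 𝒜 d Y = 0) : entropyCover f W 𝒜 Y ≤ d :=
  csInf_le ⟨0, fun _ hd => hd.1⟩ ⟨hd, h⟩

lemma entropyOn_nonneg : 0 ≤ entropyOn f W Y :=
  Real.iSup_nonneg fun _ => Real.iSup_nonneg fun _ => entropyCover_nonneg

lemma entropyOn_le {a : ℝ} (ha : 0 ≤ a)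
    (h : ∀ 𝒜 : Finset (Set X), IsFiniteOpenCover W 𝒜 → entropyCover f W 𝒜 Y ≤ a) :
    entropyOn f W Y ≤ a :=
  Real.iSup_le (fun 𝒜 => Real.iSup_le (h 𝒜) ha) ha

lemma entropyCover_le_entropyOn {a : ℝ} (ha : 0 ≤ a)
    (h : ∀ ℬ : Finset (Set X), IsFiniteOpenCover W ℬ → entropyCover f W ℬ Y ≤ a)
    (h𝒜 : IsFiniteOpenCover W 𝒜) : entropyCover f W 𝒜 Y ≤ entropyOn f W Y :=
  le_ciSup_of_le ⟨a, forall_mem_range.2 fun ℬ => Real.iSup_le (h ℬ) ha⟩ 𝒜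
    (ciSup_pos (f := fun _ => entropyCover f W 𝒜 Y) h𝒜).ge

end Bowen

section FullShift

variable {m : ℕ} {Y Z A : Set (ℕ → Fin m)} {𝒜 : Finset (Set (ℕ → Fin m))} {d : ℝ}

lemma oneShift_iterate_apply (k : ℕ) (x : ℕ → Fin m) (j : ℕ) :
    (oneShift m)^[k] x j = x (k + j) := by
  induction k generalizing x with
  | zero => simp
  | succ k ih =>
    rw [Function.iterate_succ_apply, ih]
    exact congrArg x (by lia)

lemma res_add (x : ℕ → Fin m) (k n : ℕ) :
    PiNat.res x (k + n) = PiNat.res ((oneShift m)^[k] x) n ++ PiNat.res x k := by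
  induction n with
  | zero => rfl
  | succ n ih => rw [← add_assoc, PiNat.res_succ, PiNat.res_succ, oneShift_iterate_apply, ih,
      List.cons_append]

lemma iterate_oneShift_mem_cylinder {x y : ℕ → Fin m} {k n l : ℕ}
    (hy : y ∈ PiNat.cylinder x (n + l)) (hk : k ≤ n) :
    (oneShift m)^[k] y ∈ PiNat.cylinder ((oneShift m)^[k] x) l := fun j hj => by
  simpa only [oneShift_iterate_apply] using hy (k + j) (by lia)

lemma le_itinIndex_cylinder {l : ℕ} (hl : ∀ x, ∃ A ∈ 𝒜, PiNat.cylinder x l ⊆ A)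
    (x : ℕ → Fin m) (n : ℕ) :
    (n : ℕ∞) ≤ itinIndex (oneShift m) univ 𝒜 (PiNat.cylinder x (n + l)) := by
  refine le_itinIndex fun k hk => ?_
  obtain ⟨A, hA, hxA⟩ := hl ((oneShift m)^[k] x)
  refine ⟨A, hA, (image_mono inter_subset_left).trans (image_subset_iff.2 fun y hy => ?_)⟩
  exact hxA (iterate_oneShift_mem_cylinder hy (by exact_mod_cast hk.le))

variable (m) in
open Classical in
/-- The generating cover of the full shift, consisting of the sets of sequences with a prescribed
first letter. -/
def letterCover : Finset (Set (ℕ → Fin m)) := Finset.univ.image fun a => {x | x 0 = a}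

lemma mem_letterCover {S : Set (ℕ → Fin m)} :
    S ∈ letterCover m ↔ ∃ a, {x : ℕ → Fin m | x 0 = a} = S := by
  simp [letterCover]

variable (m) in
lemma isFiniteOpenCover_letterCover : IsFiniteOpenCover univ (letterCover m) := by
  refine ⟨fun S hS => ?_, fun x _ => ⟨_, mem_letterCover.2 ⟨x 0, rfl⟩, rfl⟩⟩
  obtain ⟨a, rfl⟩ := mem_letterCover.1 hS
  exact (isOpen_discrete {a}).preimage (continuous_apply (A := fun _ => Fin m) 0)

lemma subset_cylinder_of_le_itinIndex {U : Set (ℕ → Fin m)} {x : ℕ → Fin m} (hx : x ∈ U) {n : ℕ}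
    (hn : (n : ℕ∞) ≤ itinIndex (oneShift m) univ (letterCover m) U) :
    U ⊆ PiNat.cylinder x n := by
  intro y hy k hk
  obtain ⟨S, hS, hsub⟩ :=
    exists_image_subset_of_lt_itinIndex (lt_of_lt_of_le (by exact_mod_cast hk) hn)
  obtain ⟨a, rfl⟩ := mem_letterCover.1 hS
  have hletter (z) (hz : z ∈ U) : z k = a := by
    simpa [oneShift_iterate_apply] using hsub ⟨z, ⟨hz, mem_univ z⟩, rfl⟩
  rw [hletter y hy, hletter x hx]

variable [NeZero m]

variable (m) in
lemma exists_isBowenCover_words {l : ℕ} (hl : ∀ x, ∃ A ∈ 𝒜, PiNat.cylinder x l ⊆ A) (n : ℕ) :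
    ∃ 𝒰 : (Fin (n + l) → Fin m) → Set (ℕ → Fin m),
      IsBowenCover (oneShift m) univ 𝒜 univ n 𝒰 := by
  let extend (v : Fin (n + l) → Fin m) : ℕ → Fin m := Function.extend Fin.val v 0
  refine ⟨fun v => PiNat.cylinder (extend v) (n + l),
    fun v => PiNat.isOpen_cylinder (fun _ => Fin m) _ _,
    fun x _ => mem_iUnion.2 ⟨fun j => x j, fun j hj => ?_⟩,
    fun v => le_itinIndex_cylinder hl (extend v) n⟩
  exact (Fin.val_injective.extend_apply (fun i : Fin (n + l) => x i) 0 ⟨j, hj⟩).symm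

lemma bowenM_oneShift_eq_zero (h𝒜 : IsFiniteOpenCover univ 𝒜)
    (hd : Real.log m < d) : bowenM (oneShift m) univ 𝒜 d Y = 0 := by
  obtain ⟨l, hl⟩ := exists_forall_cylinder_subset h𝒜.1 h𝒜.2
  obtain ⟨A, hA, -⟩ := hl 0
  choose 𝒰 h𝒰 using exists_isBowenCover_words m hl
  have hm : (0 : ℝ) < m := Nat.cast_pos.2 (NeZero.pos m)
  refine bowenM_eq_zero_of_card_le ⟨A, hA⟩ ((Real.log_natCast_nonneg m).trans_lt hd) hm.le
    ((Real.log_lt_iff_lt_exp hm).1 hd) (fun n => (h𝒰 n).mono (subset_univ Y) le_rfl)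
    (C := m ^ l) fun n => ?_
  simp [pow_add, mul_comm]

lemma bowenM_eq_zero_of_entropyCover_lt (h𝒜 : IsFiniteOpenCover univ 𝒜)
    (hd : entropyCover (oneShift m) univ 𝒜 Y < d) : bowenM (oneShift m) univ 𝒜 d Y = 0 := by
  have hnonempty : {d : ℝ | 0 ≤ d ∧ bowenM (oneShift m) univ 𝒜 d Y = 0}.Nonempty :=
    ⟨Real.log m + 1, add_nonneg (Real.log_natCast_nonneg m) zero_le_one,
      bowenM_oneShift_eq_zero h𝒜 (lt_add_one _)⟩
  obtain ⟨d', ⟨-, hd'⟩, hlt⟩ := exists_lt_of_csInf_lt hnonempty hd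
  exact le_antisymm ((bowenM_anti Y hlt.le).trans_eq hd') zero_le

lemma entropyCover_oneShift_le_log (h𝒜 : IsFiniteOpenCover univ 𝒜) :
    entropyCover (oneShift m) univ 𝒜 Y ≤ Real.log m :=
  le_of_forall_gt_imp_ge_of_dense fun _ hd =>
    entropyCover_le ((Real.log_natCast_nonneg m).trans hd.le) (bowenM_oneShift_eq_zero h𝒜 hd)

lemma entropyOn_oneShift_le_log : entropyOn (oneShift m) univ Y ≤ Real.log m :=
  entropyOn_le (Real.log_natCast_nonneg m) fun _ => entropyCover_oneShift_le_log

lemma entropyCover_le_entropyOn_oneShift (h𝒜 : IsFiniteOpenCover univ 𝒜) :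
    entropyCover (oneShift m) univ 𝒜 Y ≤ entropyOn (oneShift m) univ Y :=
  entropyCover_le_entropyOn (Real.log_natCast_nonneg m)
    (fun _ => entropyCover_oneShift_le_log) h𝒜

lemma entropyOn_oneShift_mono : Monotone (entropyOn (oneShift m) univ) := fun Y Z h => by
  refine entropyOn_le entropyOn_nonneg fun 𝒜 h𝒜 =>
    le_trans ?_ (entropyCover_le_entropyOn_oneShift h𝒜)
  refine le_of_forall_gt_imp_ge_of_dense fun d hd =>
    entropyCover_le (entropyCover_nonneg.trans hd.le) (le_antisymm ?_ zero_le)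
  exact (bowenM_mono d h).trans_eq (bowenM_eq_zero_of_entropyCover_lt h𝒜 hd)

lemma entropyOn_oneShift_union_le : entropyOn (oneShift m) univ (Y ∪ Z) ≤
    max (entropyOn (oneShift m) univ Y) (entropyOn (oneShift m) univ Z) := by
  refine entropyOn_le (entropyOn_nonneg.trans (le_max_left _ _)) fun 𝒜 h𝒜 =>
    le_of_forall_gt_imp_ge_of_dense fun d hd => ?_
  obtain ⟨hY, hZ⟩ := max_lt_iff.1 hd
  refine entropyCover_le (entropyOn_nonneg.trans hY.le) (bowenM_union_eq_zero ?_ ?_) <;>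
    refine bowenM_eq_zero_of_entropyCover_lt h𝒜 ?_
  · exact (entropyCover_le_entropyOn_oneShift h𝒜).trans_lt hY
  · exact (entropyCover_le_entropyOn_oneShift h𝒜).trans_lt hZ

lemma exists_forall_iterate_notMem_cylinder {ι : Type*} {c : ι → ℕ → Fin m} {L : ι → ℕ}
    {q : ℝ≥0∞} (hL : ∀ i, 0 < L i) (hq : q ≠ ⊤) (hsum : ∑' i, q ^ L i + 1 ≤ m * q) :
    ∃ x, ∀ k i, (oneShift m)^[k] x ∉ PiNat.cylinder (c i) (L i) := by
  obtain ⟨x, hx⟩ := exists_forall_not_infix_res (w := fun i => PiNat.res (c i) (L i))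
    (fun i => List.length_pos_iff.1 (by simpa using hL i)) hq (by simpa using hsum)
  refine ⟨x, fun k i hk => hx (k + L i) i ?_⟩
  rw [PiNat.cylinder_eq_res] at hk
  rw [res_add, hk]
  exact (List.prefix_append _ _).isInfix

lemma exists_cylinder_cover_of_bowenM_eq_zero (hd : 0 ≤ d)
    (hZ : bowenM (oneShift m) univ (letterCover m) d Z = 0) {ε : ℝ≥0∞} (hε : ε ≠ 0) :
    ∃ (c : ℕ → ℕ → Fin m) (L : ℕ → ℕ), (∀ i, 0 < L i) ∧
      Z ⊆ (⋃ i, PiNat.cylinder (c i) (L i)) ∧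
      ∑' i, ENNReal.ofReal (Real.exp (-d)) ^ L i ≤ ε := by
  obtain ⟨𝒰, h𝒰, hsum⟩ := bowenM_eq_zero_iff.1 hZ 1 (ε / 2) (ENNReal.half_pos hε)
  obtain ⟨δ, hδ, hδsum⟩ := ENNReal.exists_pos_sum_of_countable' (ENNReal.half_pos hε).ne' ℕ
  choose L hLpos hLle hLpow using fun i =>
    exists_pos_pow_le_expWeight_add hd (by simpa using h𝒰.le_itinIndex i) (hδ i).ne'
  have hcylinder (i : ℕ) : ∃ c, 𝒰 i ⊆ PiNat.cylinder c (L i) := by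
    rcases (𝒰 i).eq_empty_or_nonempty with hempty | ⟨x, hx⟩
    · exact ⟨0, by simp [hempty]⟩
    · exact ⟨x, subset_cylinder_of_le_itinIndex hx (hLle i)⟩
  choose c hc using hcylinder
  refine ⟨c, L, hLpos, h𝒰.subset_iUnion.trans (iUnion_mono hc), ?_⟩
  calc ∑' i, ENNReal.ofReal (Real.exp (-d)) ^ L i
      ≤ ∑' i, (expWeight d (itinIndex (oneShift m) univ (letterCover m) (𝒰 i)) + δ i) :=
        ENNReal.tsum_le_tsum hLpow
    _ ≤ ε / 2 + ε / 2 := by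
        rw [ENNReal.tsum_add]
        exact add_le_add hsum.le hδsum.le
    _ = ε := ENNReal.add_halves ε

lemma exc_nonempty_of_bowenM_eq_zero (hd : 0 ≤ d) (hdm : d < Real.log m)
    (hZ : bowenM (oneShift m) univ (letterCover m) d Z = 0) :
    (exc (oneShift m) univ Z).Nonempty := by
  set q := ENNReal.ofReal (Real.exp (-d)) with hq
  have hmq : 1 < m * q := by
    rw [hq, ← ENNReal.ofReal_natCast, ← ENNReal.ofReal_mul (Nat.cast_nonneg m),
      ENNReal.one_lt_ofReal, Real.exp_neg, ← div_eq_mul_inv, one_lt_div (Real.exp_pos d)]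
    exact (Real.lt_log_iff_exp_lt (Nat.cast_pos.2 (NeZero.pos m))).1 hdm
  obtain ⟨c, L, hL, hcover, hsum⟩ :=
    exists_cylinder_cover_of_bowenM_eq_zero hd hZ (tsub_pos_of_lt hmq).ne'
  obtain ⟨x, hx⟩ := exists_forall_iterate_notMem_cylinder (c := c) hL ENNReal.ofReal_ne_top
    ((add_le_add_left hsum 1).trans_eq (tsub_add_cancel_of_le hmq.le))
  have hopen : IsOpen (⋃ i, PiNat.cylinder (c i) (L i)) :=
    isOpen_iUnion fun i => PiNat.isOpen_cylinder (fun _ => Fin m) _ _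
  have hdisjoint : Disjoint (forwardOrbit (oneShift m) x) (⋃ i, PiNat.cylinder (c i) (L i)) := by
    rw [disjoint_iUnion_right]
    exact fun i => Set.disjoint_left.2 (forall_mem_range.2 fun k => hx k i)
  exact ⟨x, mem_univ x, ((hdisjoint.closure_left hopen).mono_right hcover).inter_eq⟩

lemma exc_nonempty_of_entropyOn_lt_log (hZ : entropyOn (oneShift m) univ Z < Real.log m) :
    (exc (oneShift m) univ Z).Nonempty := by
  have hletter := isFiniteOpenCover_letterCover m
  obtain ⟨d, hZd, hdm⟩ := exists_between hZ
  exact exc_nonempty_of_bowenM_eq_zero (entropyOn_nonneg.trans hZd.le) hdm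
    (bowenM_eq_zero_of_entropyCover_lt hletter
      ((entropyCover_le_entropyOn_oneShift hletter).trans_lt hZd))

variable (m) in
theorem entropyOn_oneShift_univ : entropyOn (oneShift m) univ univ = Real.log m := by
  refine le_antisymm entropyOn_oneShift_le_log (le_of_not_gt fun hlt => ?_)
  obtain ⟨x, hx⟩ := exc_nonempty_of_entropyOn_lt_log hlt
  exact notMem_of_mem_exc hx (mem_univ x)

theorem shift_limitExc_full_entropy_general
    (hA : entropyOn (oneShift m) univ A < entropyOn (oneShift m) univ univ) :
    entropyOn (oneShift m) univ (exc (oneShift m) univ A) = entropyOn (oneShift m) univ univ := by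
  refine le_antisymm (entropyOn_oneShift_mono (subset_univ _)) (le_of_not_gt fun hexc => ?_)
  have hunion := entropyOn_oneShift_union_le.trans_lt (max_lt hA hexc)
  rw [entropyOn_oneShift_univ] at hunion
  obtain ⟨x, hx⟩ := exc_nonempty_of_entropyOn_lt_log hunion
  exact notMem_of_mem_exc (exc_anti _ _ subset_union_right hx) (exc_anti _ _ subset_union_left hx)

end FullShift

/-- **Theorem (Dolgopyat).** If `A ⊆ Σ_M^+` satisfies `h(σ⁺, A) < h(σ⁺)`, then the limit
`A`-exceptional set of the one-sided full shift has full topological entropy. -/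
theorem shift_limitExc_full_entropy (m : ℕ) (hm : 0 < m) (A : Set (ℕ → Fin m))
    (hA : entropyOn (oneShift m) univ A < entropyOn (oneShift m) univ univ) :
    entropyOn (oneShift m) univ (limitExc (oneShift m) univ A)
      = entropyOn (oneShift m) univ univ := by
  have : NeZero m := ⟨hm.ne'⟩
  exact (entropyOn_oneShift_mono (subset_univ _)).antisymm <|
    (shift_limitExc_full_entropy_general hA).ge.trans (entropyOn_oneShift_mono exc_subset_limitExc)

end ExceptionalSets
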